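/- Let n₀,n₁,n₂,n₃ ∈ ℂ and let (p(τ), A(τ)) be a holomorphic solution of the Hamiltonian system on an open subset V ⊆ ℍ such that for every τ ∈ V, p(τ) ∉ Λ_τ, 2p(τ) ∉ Λ_τ and p(τ) + ω_k/2 ∉ Λ_τ for k = 0,1,2,3. Define F(τ) = A(τ) + (1/2)(ζ(2p(τ)|τ) − 2ζ(p(τ)|τ)). Then F satisfies the linear first-order ODE dF/dτ = (i/(2π))(2℘(2p(τ)|τ) − ℘(p(τ)|τ) + η₁(τ))F(τ) − (i/(4π)) Σ_{k=0}^{3} n_k(n_k+1)℘′(p(τ) + ω_k/2|τ). In particular, if n_k = 0 for all k, then dF/dτ = (i/(2π))(2℘(2p(τ)|τ) − ℘(p(τ)|τ) + η₁(τ))F(τ). -/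

import Mathlib

open Complex Filter Topology Asymptotics

noncomputable section

/-- membership in the lattice `Λ_τ = ℤ + τℤ`. -/
def InLattice (τ z : ℂ) : Prop := ∃ m n : ℤ, z = (m : ℂ) + (n : ℂ) * τ

/-- the half-period generators `ω₀ = 0, ω₁ = 1, ω₂ = τ, ω₃ = 1 + τ`. -/
def halfp (τ : ℂ) : Fin 4 → ℂ := ![0, 1, τ, 1 + τ]

/-- the Weierstrass elliptic function `℘(z|τ)`. -/
def wp (τ z : ℂ) : ℂ :=
  z⁻¹ ^ 2 + ∑' w : {w : ℤ × ℤ // w ≠ 0},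
    ((z - ((w.1.1 : ℂ) + (w.1.2 : ℂ) * τ))⁻¹ ^ 2 - ((w.1.1 : ℂ) + (w.1.2 : ℂ) * τ)⁻¹ ^ 2)

/-- `℘′(z|τ)`, the `z`-derivative of `℘`. -/
def wpd (τ z : ℂ) : ℂ := deriv (wp τ) z

/-- `℘″(z|τ)`. -/
def wpdd (τ z : ℂ) : ℂ := deriv (wpd τ) z

def e1 (τ : ℂ) : ℂ := wp τ (1 / 2)
def e2 (τ : ℂ) : ℂ := wp τ (τ / 2)
def e3 (τ : ℂ) : ℂ := wp τ ((1 + τ) / 2)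

def g2 (τ : ℂ) : ℂ := -4 * (e1 τ * e2 τ + e1 τ * e3 τ + e2 τ * e3 τ)

/-- `zeta` is the Weierstrass zeta function: for each `τ ∈ ℍ`, `zeta τ` is odd, satisfies
`∂ζ/∂z = -℘` off the lattice, and `ζ(z|τ) - 1/z → 0` as `z → 0`. -/
def IsWeierstrassZeta (zeta : ℂ → ℂ → ℂ) : Prop :=
  ∀ τ : ℂ, 0 < τ.im →
    (∀ z : ℂ, zeta τ (-z) = - zeta τ z) ∧
    (∀ z : ℂ, ¬ InLattice τ z → HasDerivAt (zeta τ) (- wp τ z) z) ∧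
    Tendsto (fun z => zeta τ z - z⁻¹) (𝓝[≠] (0 : ℂ)) (𝓝 0)

/-- `eta1 τ = ζ(z+1|τ) - ζ(z|τ)` is the first quasi-period. -/
def IsEta1 (zeta : ℂ → ℂ → ℂ) (eta1 : ℂ → ℂ) : Prop :=
  ∀ τ : ℂ, 0 < τ.im → ∀ z : ℂ, ¬ InLattice τ z →
    eta1 τ = zeta τ (z + 1) - zeta τ z

/-- `eta2 τ = ζ(z+τ|τ) - ζ(z|τ)` is the second quasi-period. -/
def IsEta2 (zeta : ℂ → ℂ → ℂ) (eta2 : ℂ → ℂ) : Prop :=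
  ∀ τ : ℂ, 0 < τ.im → ∀ z : ℂ, ¬ InLattice τ z →
    eta2 τ = zeta τ (z + τ) - zeta τ z

/-- `sigma` is the Weierstrass sigma function: entire, odd, with
`∂/∂z log σ = ζ` off the lattice and `σ(z|τ)/z → 1` as `z → 0`. -/
def IsWeierstrassSigma (zeta sigma : ℂ → ℂ → ℂ) : Prop :=
  ∀ τ : ℂ, 0 < τ.im →
    (∀ z : ℂ, sigma τ (-z) = - sigma τ z) ∧
    Differentiable ℂ (sigma τ) ∧
    (∀ z : ℂ, ¬ InLattice τ z → HasDerivAt (sigma τ) (zeta τ z * sigma τ z) z) ∧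
    Tendsto (fun z => sigma τ z / z) (𝓝[≠] (0 : ℂ)) (𝓝 1)

/-- the Hamiltonian system (142) for `(p(τ), A(τ))` on `V`. -/
def HamSystem (n : Fin 4 → ℂ) (zeta : ℂ → ℂ → ℂ) (eta1 : ℂ → ℂ)
    (V : Set ℂ) (p A : ℂ → ℂ) : Prop :=
  ∀ τ ∈ V,
    HasDerivAt p ((-Complex.I / (4 * (Real.pi : ℂ))) *
      (2 * A τ - zeta τ (2 * p τ) + 2 * p τ * eta1 τ)) τ ∧
    HasDerivAt A ((Complex.I / (4 * (Real.pi : ℂ))) *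
      ((2 * wp τ (2 * p τ) + 2 * eta1 τ) * A τ - (3 / 2) * wpd τ (2 * p τ)
        - ∑ k : Fin 4, n k * (n k + 1) * wpd τ (p τ + halfp τ k / 2))) τ

/-- the generalized Lamé potential `I(z;τ)`. -/
def Ipot (n : Fin 4 → ℂ) (zeta : ℂ → ℂ → ℂ) (A B p τ z : ℂ) : ℂ :=
  (∑ k : Fin 4, n k * (n k + 1) * wp τ (z + halfp τ k / 2))
    + (3 / 4) * (wp τ (z + p) + wp τ (z - p))
    + A * (zeta τ (z + p) - zeta τ (z - p)) + B

end

open scoped Real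

/-- The period pair `(1, τ)` for `τ` in the upper half-plane. -/
def upperPair (τ : ℂ) (hτ : 0 < τ.im) : PeriodPair where
  ω₁ := 1
  ω₂ := τ
  indep := by
    rw [LinearIndependent.pair_iff]
    intro s t h
    have him := congrArg Complex.im h
    have hre := congrArg Complex.re h
    simp at him hre
    have ht : t = 0 := by
      rcases him with h | h
      · exact h
      · exact absurd h hτ.ne'
    subst ht
    simpa using hre

theorem mem_lattice_upperPair {τ : ℂ} (hτ : 0 < τ.im) {z : ℂ} :
    z ∈ (upperPair τ hτ).lattice ↔ InLattice τ z := by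
  rw [PeriodPair.mem_lattice]
  simp only [upperPair, InLattice, mul_one, eq_comm]

theorem wp_eq_weierstrassP {τ : ℂ} (hτ : 0 < τ.im) (z : ℂ) :
    wp τ z = (upperPair τ hτ).weierstrassP z := by
  set L := upperPair τ hτ
  have hs := L.hasSum_weierstrassP z
  have hs' := L.latticeEquivProd.symm.toEquiv.hasSum_iff.mpr hs
  have hf (x : ℤ × ℤ) : ((fun l : L.lattice => 1 / (z - l) ^ 2 - 1 / (l : ℂ) ^ 2) ∘
      L.latticeEquivProd.symm.toEquiv) x =
      (z - ((x.1 : ℂ) + x.2 * τ))⁻¹ ^ 2 - ((x.1 : ℂ) + x.2 * τ)⁻¹ ^ 2 := by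
    have := L.latticeEquiv_symm_apply x
    simp only [Function.comp_apply, LinearEquiv.coe_toEquiv, this]
    simp [L, upperPair]
  rw [funext hf] at hs'
  have hsplit := hs'.summable.sum_add_tsum_compl (s := {0})
  rw [wp, ← hs'.tsum_eq, ← hsplit]
  simp only [Finset.sum_singleton, Prod.fst_zero, Prod.snd_zero, Int.cast_zero, zero_mul, add_zero,
    sub_zero, inv_zero, ne_eq, OfNat.ofNat_ne_zero, not_false_eq_true, zero_pow]
  congr 1
  exact (Equiv.subtypeEquivRight (by simp)).tsum_eq (fun x : ((({0} : Finset (ℤ × ℤ)) : Set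
    (ℤ × ℤ))ᶜ : Set (ℤ × ℤ)) => (z - ((x.1.1 : ℂ) + x.1.2 * τ))⁻¹ ^ 2 -
      ((x.1.1 : ℂ) + x.1.2 * τ)⁻¹ ^ 2)

section FixedLattice

variable {τ : ℂ}

theorem InLattice.zero (τ : ℂ) : InLattice τ 0 := ⟨0, 0, by simp⟩

theorem InLattice.one (τ : ℂ) : InLattice τ 1 := ⟨1, 0, by simp⟩

theorem InLattice.self (τ : ℂ) : InLattice τ τ := ⟨0, 1, by simp⟩

theorem InLattice.add {z w : ℂ} (hz : InLattice τ z) (hw : InLattice τ w) :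
    InLattice τ (z + w) := by
  obtain ⟨a, b, rfl⟩ := hz
  obtain ⟨c, d, rfl⟩ := hw
  exact ⟨a + c, b + d, by push_cast; ring⟩

theorem InLattice.neg {z : ℂ} (hz : InLattice τ z) : InLattice τ (-z) := by
  obtain ⟨a, b, rfl⟩ := hz
  exact ⟨-a, -b, by push_cast; ring⟩

theorem inLattice_add_iff {z w : ℂ} (hw : InLattice τ w) :
    InLattice τ (z + w) ↔ InLattice τ z :=
  ⟨fun h => by simpa using h.add hw.neg, fun h => h.add hw⟩

theorem setOf_inLattice (hτ : 0 < τ.im) :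
    {z | InLattice τ z} = ((upperPair τ hτ).lattice : Set ℂ) := by
  ext z
  exact (mem_lattice_upperPair hτ).symm

theorem isOpen_setOf_not_inLattice (hτ : 0 < τ.im) : IsOpen {z | ¬ InLattice τ z} := by
  have : IsClosed {z | InLattice τ z} := by
    rw [setOf_inLattice hτ]
    exact (upperPair τ hτ).isClosed_lattice
  exact this.isOpen_compl

theorem eventually_not_inLattice (hτ : 0 < τ.im) {z : ℂ} (hz : ¬ InLattice τ z) :
    ∀ᶠ w in 𝓝 z, ¬ InLattice τ w :=
  (isOpen_setOf_not_inLattice hτ).mem_nhds hz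

theorem eventually_punctured_not_inLattice (hτ : 0 < τ.im) (z : ℂ) :
    ∀ᶠ w in 𝓝[≠] z, ¬ InLattice τ w := by
  have h := (upperPair τ hτ).compl_lattice_sdiff_singleton_mem_nhds z
  filter_upwards [nhdsWithin_le_nhds h, self_mem_nhdsWithin] with w hw hwz hin
  exact hw ⟨(mem_lattice_upperPair hτ).mpr hin, hwz⟩

theorem isPreconnected_setOf_not_inLattice (τ : ℂ) : IsPreconnected {z | ¬ InLattice τ z} := by
  have hc : {z | InLattice τ z}.Countable := by
    have : {z | InLattice τ z} = Set.range fun x : ℤ × ℤ => (x.1 : ℂ) + x.2 * τ := by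
      ext z
      simp [InLattice, eq_comm]
    rw [this]
    exact Set.countable_range _
  exact (hc.isConnected_compl_of_one_lt_rank (by simp)).isPreconnected

theorem wp_add_lattice (hτ : 0 < τ.im) {w : ℂ} (hw : InLattice τ w) (z : ℂ) :
    wp τ (z + w) = wp τ z := by
  rw [wp_eq_weierstrassP hτ, wp_eq_weierstrassP hτ]
  exact (upperPair τ hτ).weierstrassP_add_coe z ⟨w, (mem_lattice_upperPair hτ).mpr hw⟩

theorem wp_neg (hτ : 0 < τ.im) (z : ℂ) : wp τ (-z) = wp τ z := by
  rw [wp_eq_weierstrassP hτ, wp_eq_weierstrassP hτ, PeriodPair.weierstrassP_neg]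

theorem wpd_eq_derivWeierstrassP (hτ : 0 < τ.im) :
    wpd τ = (upperPair τ hτ).derivWeierstrassP := by
  ext z
  rw [wpd, funext (wp_eq_weierstrassP hτ), PeriodPair.deriv_weierstrassP]

theorem wpd_add_lattice (hτ : 0 < τ.im) {w : ℂ} (hw : InLattice τ w) (z : ℂ) :
    wpd τ (z + w) = wpd τ z := by
  rw [wpd_eq_derivWeierstrassP hτ]
  exact (upperPair τ hτ).derivWeierstrassP_add_coe z ⟨w, (mem_lattice_upperPair hτ).mpr hw⟩

theorem hasDerivAt_wp (hτ : 0 < τ.im) {z : ℂ} (hz : ¬ InLattice τ z) :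
    HasDerivAt (wp τ) (wpd τ z) z := by
  refine DifferentiableAt.hasDerivAt ?_
  rw [funext (wp_eq_weierstrassP hτ)]
  exact ((upperPair τ hτ).analyticOnNhd_weierstrassP z
    (mt (mem_lattice_upperPair hτ).mp hz)).differentiableAt

theorem differentiableAt_wpd (hτ : 0 < τ.im) {z : ℂ} (hz : ¬ InLattice τ z) :
    DifferentiableAt ℂ (wpd τ) z := by
  rw [wpd_eq_derivWeierstrassP hτ]
  exact ((upperPair τ hτ).analyticOnNhd_derivWeierstrassP z
    (mt (mem_lattice_upperPair hτ).mp hz)).differentiableAt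

/-- The regular part of `℘` at the origin vanishes to second order. -/
theorem exists_regular_part_wp (hτ : 0 < τ.im) :
    ∃ P : ℂ → ℂ, AnalyticAt ℂ P 0 ∧ P 0 = 0 ∧ deriv P 0 = 0 ∧
      ∀ z, wp τ z = z⁻¹ ^ 2 + P z := by
  set L := upperPair τ hτ
  refine ⟨L.weierstrassPExcept 0, L.analyticAt_weierstrassPExcept 0,
    L.weierstrassPExcept_zero 0, ?_, fun z => ?_⟩
  · rw [L.deriv_weierstrassPExcept_same, L.derivWeierstrassPExcept_zero_zero]
  · rw [wp_eq_weierstrassP hτ, ← L.weierstrassPExcept_add 0 z]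
    simp
    ring

end FixedLattice

/-- A function with finite limits and only isolated singularities extends holomorphically. -/
theorem exists_differentiableOn_tendsto_punctured {U : Set ℂ} (hU : IsOpen U) {f : ℂ → ℂ}
    (hlim : ∀ z ∈ U, ∃ l, Tendsto f (𝓝[≠] z) (𝓝 l))
    (hd : ∀ z ∈ U, ∀ᶠ w in 𝓝[≠] z, DifferentiableAt ℂ f w) :
    ∃ F : ℂ → ℂ, DifferentiableOn ℂ F U ∧ ∀ z ∈ U, Tendsto f (𝓝[≠] z) (𝓝 (F z)) := by
  classical
  choose! F hF using hlim
  refine ⟨F, fun z hz => ?_, hF⟩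
  have heq : ∀ᶠ w in 𝓝[≠] z, F w = f w := by
    filter_upwards [hd z hz, nhdsWithin_le_nhds (hU.mem_nhds hz)] with w hw hwU
    exact tendsto_nhds_unique (hF w hwU) (hw.continuousAt.tendsto.mono_left nhdsWithin_le_nhds)
  have heq' : ∀ᶠ w in 𝓝[≠] z, F =ᶠ[𝓝 w] f := by
    rw [eventually_nhdsWithin_iff, ← eventually_eventually_nhds] at heq
    rw [eventually_nhdsWithin_iff]
    filter_upwards [heq] with w hw hwz
    filter_upwards [hw, isOpen_compl_singleton.mem_nhds hwz] with v hv hvz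
    exact hv hvz
  have hdF : ∀ᶠ w in 𝓝[≠] z, DifferentiableAt ℂ F w := by
    filter_upwards [heq', hd z hz] with w hw hw'
    exact hw'.congr_of_eventuallyEq hw
  have hcF : ContinuousAt F z := by
    rw [continuousAt_iff_punctured_nhds]
    exact (hF z hz).congr' (heq.mono fun w hw => hw.symm)
  exact (analyticAt_of_differentiable_on_punctured_nhds_of_continuousAt hdF
    hcF).differentiableAt.differentiableWithinAt

theorem tendsto_add_const_punctured (z w : ℂ) :
    Tendsto (fun u => u + w) (𝓝[≠] z) (𝓝[≠] (z + w)) := by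
  refine tendsto_nhdsWithin_iff.mpr ⟨?_, ?_⟩
  · exact (Continuous.tendsto (by fun_prop) z).mono_left nhdsWithin_le_nhds
  · filter_upwards [self_mem_nhdsWithin] with u hu
    simpa using hu

/-- An entire function with both periods `1` and `τ` is constant. -/
theorem Differentiable.apply_eq_apply_of_periods {τ : ℂ} (hτ : 0 < τ.im) {f : ℂ → ℂ}
    (hf : Differentiable ℂ f) (h1 : ∀ z, f (z + 1) = f z) (h2 : ∀ z, f (z + τ) = f z)
    (z w : ℂ) : f z = f w := by
  refine hf.apply_eq_apply_of_bounded (IsZLattice.isCompact_range_of_periodic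
    (upperPair τ hτ).lattice _ hf.continuous fun z w hw => ?_).isBounded z w
  obtain ⟨m, n, rfl⟩ := (mem_lattice_upperPair hτ).mp hw
  have p1 : Function.Periodic f 1 := h1
  have p2 : Function.Periodic f τ := h2
  have e1 := p1.int_mul m
  have e2 := p2.int_mul n
  have := e1.add_period e2 z
  simpa using this

/-- A function with removable singularities whose increments along `1` and `τ` are constant is
affine. -/
theorem exists_affine_of_quasiperiodic {τ : ℂ} (hτ : 0 < τ.im) {f : ℂ → ℂ} {a b : ℂ}
    (hlim : ∀ z, ∃ l, Tendsto f (𝓝[≠] z) (𝓝 l))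
    (hd : ∀ z, ∀ᶠ w in 𝓝[≠] z, DifferentiableAt ℂ f w)
    (h1 : ∀ z, ∀ᶠ w in 𝓝[≠] z, f (w + 1) = f w + a)
    (h2 : ∀ z, ∀ᶠ w in 𝓝[≠] z, f (w + τ) = f w + b) :
    ∃ d : ℂ, ∀ z, Tendsto f (𝓝[≠] z) (𝓝 (a * z + d)) := by
  obtain ⟨F, hF, hFf⟩ := exists_differentiableOn_tendsto_punctured isOpen_univ
    (fun z _ => hlim z) (fun z _ => hd z)
  rw [differentiableOn_univ] at hF
  have shift {w c : ℂ} (h : ∀ z, ∀ᶠ u in 𝓝[≠] z, f (u + w) = f u + c) (z : ℂ) :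
      F (z + w) = F z + c := by
    have hl := (hFf (z + w) trivial).comp (tendsto_add_const_punctured z w)
    have hr := (hFf z trivial).add_const c
    refine tendsto_nhds_unique (hl.congr' ?_) hr
    filter_upwards [h z] with u hu using hu
  have dshift {w c : ℂ} (h : ∀ z, F (z + w) = F z + c) (z : ℂ) :
      deriv F (z + w) = deriv F z := by
    rw [← deriv_comp_add_const, funext h, deriv_add_const]
  have hF' : Differentiable ℂ (deriv F) := hF.deriv
  have hconst := hF'.apply_eq_apply_of_periods hτ (dshift (shift h1)) (dshift (shift h2))
  have haff (z : ℂ) : F z = deriv F 0 * z + F 0 := by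
    have hg : Differentiable ℂ fun z => F z - deriv F 0 * z := by fun_prop
    have hg' (z : ℂ) : deriv (fun z => F z - deriv F 0 * z) z = 0 := by
      have : HasDerivAt (fun z => F z - deriv F 0 * z) (deriv F z - deriv F 0 * 1) z :=
        (hF z).hasDerivAt.sub ((hasDerivAt_id z).const_mul _)
      rw [this.deriv, hconst z 0]
      ring
    have := is_const_of_deriv_eq_zero hg hg' z 0
    simp at this
    rw [← this]
    ring
  have ha : deriv F 0 = a := by
    have := shift h1 0
    rw [haff (0 + 1), haff 0] at this
    linear_combination this
  refine ⟨F 0, fun z => ?_⟩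
  rw [← ha, ← haff z]
  exact hFf z trivial

/-- Differentiation of a series of holomorphic functions whose terms are, up to finitely many
exceptions, uniformly bounded by a summable family. -/
theorem hasDerivAt_tsum_of_cofinite_bound {ι : Type*} {f : ι → ℂ → ℂ} {f' : ι → ℂ} {u : ι → ℝ}
    {U : Set ℂ} {x : ℂ} (hu : Summable u) (hU : IsOpen U) (hx : x ∈ U)
    (hb : ∀ᶠ i in cofinite, ∀ s ∈ U, DifferentiableAt ℂ (f i) s ∧ ‖f i s‖ ≤ u i)
    (hf : ∀ i, HasDerivAt (f i) (f' i) x) :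
    Summable f' ∧ HasDerivAt (fun s => ∑' i, f i s) (∑' i, f' i) x := by
  classical
  have hfin : {i | ¬ ∀ s ∈ U, DifferentiableAt ℂ (f i) s ∧ ‖f i s‖ ≤ u i}.Finite := hb
  set T : Finset ι := hfin.toFinset with hT
  have hg (i : {i // i ∉ T}) (s : ℂ) (hs : s ∈ U) :
      DifferentiableAt ℂ (f i) s ∧ ‖f i s‖ ≤ u i := by
    have := i.2
    simp only [hT, Set.Finite.mem_toFinset, Set.mem_ofPred_eq, not_not] at this
    exact this s hs
  have huT : Summable fun i : {i // i ∉ T} => u i := hu.subtype _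
  have hdiff (i : {i // i ∉ T}) : DifferentiableOn ℂ (f i) U :=
    fun s hs => (hg i s hs).1.differentiableWithinAt
  have hder := hasSum_deriv_of_summable_norm huT hdiff hU (fun i s hs => (hg i s hs).2) hx
  have hD := ((differentiableOn_tsum_of_summable_norm huT hdiff hU
    (fun i s hs => (hg i s hs).2)).differentiableAt (hU.mem_nhds hx)).hasDerivAt
  simp only [(hf _).deriv] at hder
  have hsum' : Summable f' := (Finset.summable_compl_iff T).mp hder.summable
  refine ⟨hsum', ?_⟩
  rw [← hsum'.sum_add_tsum_subtype_compl T, hder.tsum_eq]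
  refine ((HasDerivAt.fun_sum fun i (_ : i ∈ T) => hf i).add hD).congr_of_eventuallyEq ?_
  filter_upwards [hU.mem_nhds hx] with s hs
  have hsum : Summable fun i => f i s := (Finset.summable_compl_iff T).mp
    (Summable.of_norm_bounded huT fun i => (hg i s hs).2)
  exact (hsum.sum_add_tsum_subtype_compl T).symm

noncomputable section

/-- The lattice point `m + nτ`. -/
def latticePoint (τ : ℂ) (w : ℤ × ℤ) : ℂ := (w.1 : ℂ) + (w.2 : ℂ) * τ

/-- The series for the regular part `ζ(z|τ) - 1/z` of the Weierstrass zeta function. -/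
def zetaReg (τ z : ℂ) : ℂ :=
  ∑' w : {w : ℤ × ℤ // w ≠ 0},
    ((z - latticePoint τ w)⁻¹ + (latticePoint τ w)⁻¹ + z * (latticePoint τ w)⁻¹ ^ 2)

/-- The termwise derivative of `zetaReg` in `τ`. -/
def zetaRegTau (τ z : ℂ) : ℂ :=
  ∑' w : {w : ℤ × ℤ // w ≠ 0},
    (w.1.2 : ℂ) * ((z - latticePoint τ w)⁻¹ ^ 2 - (latticePoint τ w)⁻¹ ^ 2
      - 2 * z * (latticePoint τ w)⁻¹ ^ 3)

end

theorem latticePoint_ne_zero {τ : ℂ} (hτ : 0 < τ.im) {w : ℤ × ℤ} (hw : w ≠ 0) :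
    latticePoint τ w ≠ 0 := by
  intro h
  have him := congrArg Complex.im h
  have hre := congrArg Complex.re h
  simp [latticePoint, hτ.ne'] at him hre
  simp [him] at hre
  exact hw (Prod.ext hre him)

theorem abs_im_mul_le_norm_latticePoint (τ : ℂ) (w : ℤ × ℤ) :
    |(w.2 : ℝ)| * |τ.im| ≤ ‖latticePoint τ w‖ := by
  rw [← abs_mul]
  simpa [latticePoint] using Complex.abs_im_le_norm (latticePoint τ w)

theorem half_norm_latticePoint_le {τ s : ℂ} (hs : ‖s - τ‖ ≤ τ.im / 2)
    (w : ℤ × ℤ) : ‖latticePoint τ w‖ / 2 ≤ ‖latticePoint s w‖ := by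
  have hτ : 0 ≤ τ.im := by linarith [norm_nonneg (s - τ)]
  have h1 := abs_im_mul_le_norm_latticePoint τ w
  rw [abs_of_nonneg hτ] at h1
  have h2 : latticePoint τ w = latticePoint s w - w.2 * (s - τ) := by
    simp only [latticePoint]
    ring
  have h3 : ‖latticePoint τ w‖ ≤ ‖latticePoint s w‖ + |(w.2 : ℝ)| * ‖s - τ‖ := by
    conv_lhs => rw [h2]
    refine (norm_sub_le _ _).trans_eq ?_
    rw [norm_mul, Complex.norm_intCast]
  have h4 : |(w.2 : ℝ)| * ‖s - τ‖ ≤ |(w.2 : ℝ)| * (τ.im / 2) := by gcongr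
  linarith

theorem summable_norm_latticePoint_pow {τ : ℂ} (hτ : 0 < τ.im) :
    Summable fun w : ℤ × ℤ => (‖latticePoint τ w‖ ^ 3)⁻¹ := by
  set L := upperPair τ hτ
  have h : Summable fun l : L.lattice => ‖l‖ ^ (-3 : ℝ) :=
    ZLattice.summable_norm_rpow _ _ (by simp; norm_num)
  have h' := L.latticeEquivProd.symm.toEquiv.summable_iff.mpr h
  refine h'.congr fun w => ?_
  have hw : (L.latticeEquivProd.symm w : ℂ) = latticePoint τ w := by
    rw [L.latticeEquiv_symm_apply]
    simp [L, upperPair, latticePoint]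
  simp only [Function.comp_apply, LinearEquiv.coe_toEquiv]
  rw [← Submodule.norm_coe, hw, Real.rpow_neg (norm_nonneg _)]
  norm_cast

theorem eventually_le_norm_latticePoint {τ : ℂ} (hτ : 0 < τ.im) (R : ℝ) :
    ∀ᶠ w : {w : ℤ × ℤ // w ≠ 0} in cofinite, R ≤ ‖latticePoint τ w‖ := by
  have h := ((summable_norm_latticePoint_pow hτ).subtype
    {w : ℤ × ℤ | w ≠ 0}).tendsto_cofinite_zero
  have hR : 0 < ((|R| + 1) ^ 3)⁻¹ := by positivity
  filter_upwards [h.eventually_lt_const hR] with w hw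
  by_contra! hlt
  have hpos : 0 < ‖latticePoint τ w‖ := norm_pos_iff.mpr (latticePoint_ne_zero hτ w.2)
  have : ‖latticePoint τ w‖ ^ 3 ≤ (|R| + 1) ^ 3 := by
    gcongr
    linarith [le_abs_self R]
  exact absurd (inv_anti₀ (by positivity) this) (not_le.mpr hw)

theorem norm_sub_ge_half {z l : ℂ} {R : ℝ} (hz : ‖z‖ ≤ R) (hl : 2 * R ≤ ‖l‖) :
    ‖l‖ / 2 ≤ ‖z - l‖ := by
  have := norm_sub_norm_le l z
  rw [norm_sub_rev] at this
  linarith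

theorem norm_zetaReg_term_le {z l : ℂ} {R : ℝ} (hR : 0 < R) (hz : ‖z‖ ≤ R) (hl : 2 * R ≤ ‖l‖) :
    ‖(z - l)⁻¹ + l⁻¹ + z * l⁻¹ ^ 2‖ ≤ 2 * R ^ 2 * (‖l‖ ^ 3)⁻¹ := by
  have h1 := norm_sub_ge_half hz hl
  have hlpos : 0 < ‖l‖ := by linarith
  have hl0 : l ≠ 0 := norm_pos_iff.mp hlpos
  have hzl : z - l ≠ 0 := norm_pos_iff.mp (by linarith)
  have : (z - l)⁻¹ + l⁻¹ + z * l⁻¹ ^ 2 = z ^ 2 / (l ^ 2 * (z - l)) := by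
    field_simp
    ring
  rw [this, norm_div, norm_mul, norm_pow, norm_pow]
  calc ‖z‖ ^ 2 / (‖l‖ ^ 2 * ‖z - l‖) ≤ R ^ 2 / (‖l‖ ^ 2 * (‖l‖ / 2)) := by gcongr
    _ = 2 * R ^ 2 * (‖l‖ ^ 3)⁻¹ := by field_simp

theorem norm_zetaRegTau_term_le {z l n : ℂ} {R c : ℝ} (hc : 0 < c) (hR : 0 < R) (hz : ‖z‖ ≤ R)
    (hl : 2 * R ≤ ‖l‖) (hn : ‖n‖ * c ≤ ‖l‖) :
    ‖n * ((z - l)⁻¹ ^ 2 - l⁻¹ ^ 2 - 2 * z * l⁻¹ ^ 3)‖ ≤ 16 * R ^ 2 / c * (‖l‖ ^ 3)⁻¹ := by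
  have h1 := norm_sub_ge_half hz hl
  have hlpos : 0 < ‖l‖ := by linarith
  have hl0 : l ≠ 0 := norm_pos_iff.mp hlpos
  have hzl : z - l ≠ 0 := norm_pos_iff.mp (by linarith)
  have : n * ((z - l)⁻¹ ^ 2 - l⁻¹ ^ 2 - 2 * z * l⁻¹ ^ 3) =
      n * (z ^ 2 * (3 * l - 2 * z)) / (l ^ 3 * (z - l) ^ 2) := by
    field_simp
    ring
  have hn' : ‖n‖ ≤ ‖l‖ / c := by rwa [le_div_iff₀ hc]
  have h3 : ‖3 * l - 2 * z‖ ≤ 4 * ‖l‖ := by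
    refine (norm_sub_le _ _).trans ?_
    rw [norm_mul, norm_mul]
    simp
    linarith
  rw [this, norm_div, norm_mul, norm_mul, norm_mul, norm_pow, norm_pow, norm_pow]
  calc ‖n‖ * (‖z‖ ^ 2 * ‖3 * l - 2 * z‖) / (‖l‖ ^ 3 * ‖z - l‖ ^ 2)
      ≤ ‖l‖ / c * (R ^ 2 * (4 * ‖l‖)) / (‖l‖ ^ 3 * (‖l‖ / 2) ^ 2) := by gcongr
    _ = 16 * R ^ 2 / c * (‖l‖ ^ 3)⁻¹ := by
      field_simp
      ring

section Derivatives

variable {τ z : ℂ}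

theorem hasDerivAt_zetaReg_term {g : ℂ → ℂ} {g' : ℂ} (w : ℤ × ℤ) {s : ℂ} (hg : HasDerivAt g g' s)
    (h0 : latticePoint s w ≠ 0) (h : g s - latticePoint s w ≠ 0) :
    HasDerivAt (fun s => (g s - latticePoint s w)⁻¹ + (latticePoint s w)⁻¹
        + g s * (latticePoint s w)⁻¹ ^ 2)
      ((w.2 : ℂ) * ((g s - latticePoint s w)⁻¹ ^ 2 - (latticePoint s w)⁻¹ ^ 2
        - 2 * g s * (latticePoint s w)⁻¹ ^ 3)
        - g' * ((g s - latticePoint s w)⁻¹ ^ 2 - (latticePoint s w)⁻¹ ^ 2)) s := by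
  have hl : HasDerivAt (fun s => latticePoint s w) (w.2 : ℂ) s := by
    simpa [latticePoint] using ((hasDerivAt_id s).const_mul (w.2 : ℂ)).const_add (w.1 : ℂ)
  have H := (((hg.sub hl).inv h).add (hl.inv h0)).add (hg.mul ((hl.inv h0).pow 2))
  refine H.congr_deriv ?_
  simp only [Pi.sub_apply, Pi.inv_apply, Pi.pow_apply, Nat.add_one_sub_one, pow_one,
    Nat.cast_ofNat] at *
  field_simp
  ring

theorem hasDerivAt_zetaReg_aux (hτ : 0 < τ.im) (hz : ∀ w : ℤ × ℤ, w ≠ 0 → z ≠ latticePoint τ w) :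
    (Summable fun w : {w : ℤ × ℤ // w ≠ 0} =>
      -((z - latticePoint τ w)⁻¹ ^ 2 - (latticePoint τ w)⁻¹ ^ 2)) ∧
    HasDerivAt (zetaReg τ) (∑' w : {w : ℤ × ℤ // w ≠ 0},
      -((z - latticePoint τ w)⁻¹ ^ 2 - (latticePoint τ w)⁻¹ ^ 2)) z := by
  have hterm {l v : ℂ} (hv : v - l ≠ 0) :
      HasDerivAt (fun v => (v - l)⁻¹ + l⁻¹ + v * l⁻¹ ^ 2) (-((v - l)⁻¹ ^ 2 - l⁻¹ ^ 2)) v := by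
    have H := (((((hasDerivAt_id v).sub_const l).inv hv).add_const l⁻¹).add
      ((hasDerivAt_id v).mul_const (l⁻¹ ^ 2)))
    refine H.congr_deriv ?_
    simp only [id]
    field_simp
    ring
  set R := ‖z‖ + 1 with hRdef
  have hR : 0 < R := by positivity
  refine hasDerivAt_tsum_of_cofinite_bound (U := Metric.ball 0 R)
    (u := fun w : {w : ℤ × ℤ // w ≠ 0} => 2 * R ^ 2 * (‖latticePoint τ w‖ ^ 3)⁻¹)
    (((summable_norm_latticePoint_pow hτ).subtype _).mul_left _) Metric.isOpen_ball
    (by simp [hRdef]) ?_ fun w => hterm (sub_ne_zero.mpr (hz w w.2))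
  filter_upwards [eventually_le_norm_latticePoint hτ (2 * R)] with w hw v hv
  have hv' : ‖v‖ ≤ R := by
    rw [mem_ball_zero_iff] at hv
    exact hv.le
  have hvl := norm_sub_ge_half hv' hw
  exact ⟨(hterm (norm_pos_iff.mp (by linarith))).differentiableAt, norm_zetaReg_term_le hR hv' hw⟩

theorem hasDerivAt_zetaReg (hτ : 0 < τ.im) (hz : ∀ w : ℤ × ℤ, w ≠ 0 → z ≠ latticePoint τ w) :
    HasDerivAt (zetaReg τ) (-(wp τ z - z⁻¹ ^ 2)) z := by
  convert (hasDerivAt_zetaReg_aux hτ hz).2 using 1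
  rw [tsum_neg, wp]
  simp [latticePoint]

/-- The chain rule for the regular part of `ζ` along a curve `τ ↦ (τ, g τ)`. -/
theorem hasDerivAt_zetaReg_comp (hτ : 0 < τ.im) {g : ℂ → ℂ} {g' : ℂ}
    (hgd : ∀ᶠ s in 𝓝 τ, DifferentiableAt ℂ g s) (hg : HasDerivAt g g' τ)
    (hz : ∀ w : ℤ × ℤ, w ≠ 0 → g τ ≠ latticePoint τ w) :
    HasDerivAt (fun s => zetaReg s (g s))
      (zetaRegTau τ (g τ) - g' * (wp τ (g τ) - (g τ)⁻¹ ^ 2)) τ := by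
  set R := ‖g τ‖ + 1 with hRdef
  have hR : 0 < R := by positivity
  obtain ⟨U, hUsub, hU, hτU⟩ : ∃ U ⊆ {s | DifferentiableAt ℂ g s ∧ ‖g s‖ < R ∧ ‖s - τ‖ < τ.im / 2},
      IsOpen U ∧ τ ∈ U := by
    refine mem_nhds_iff.mp ?_
    filter_upwards [hgd, hg.continuousAt.norm.eventually_lt_const (show ‖g τ‖ < R by simp [hRdef]),
      Metric.ball_mem_nhds τ (half_pos hτ)] with s h1 h2 h3
    exact ⟨h1, h2, by simpa [dist_eq_norm] using h3⟩
  have H := hasDerivAt_tsum_of_cofinite_bound (U := U)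
    (u := fun w : {w : ℤ × ℤ // w ≠ 0} => 16 * R ^ 2 * (‖latticePoint τ w‖ ^ 3)⁻¹)
    (f := fun (w : {w : ℤ × ℤ // w ≠ 0}) s => (g s - latticePoint s w)⁻¹ + (latticePoint s w)⁻¹
        + g s * (latticePoint s w)⁻¹ ^ 2)
    (((summable_norm_latticePoint_pow hτ).subtype _).mul_left _) hU hτU ?_ fun w =>
      hasDerivAt_zetaReg_term w hg (latticePoint_ne_zero hτ w.2) (sub_ne_zero.mpr (hz w w.2))
  · have hwp := (hasDerivAt_zetaReg_aux hτ hz).1.mul_left g'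
    have hW := H.1.sub hwp
    refine H.2.congr_deriv ?_
    have e1 : wp τ (g τ) - (g τ)⁻¹ ^ 2 = ∑' w : {w : ℤ × ℤ // w ≠ 0},
        ((g τ - latticePoint τ w)⁻¹ ^ 2 - (latticePoint τ w)⁻¹ ^ 2) := by
      rw [wp]
      simp [latticePoint]
    rw [e1, ← tsum_mul_left, zetaRegTau, ← Summable.tsum_sub]
    · refine hW.congr fun w => ?_
      ring
    · refine hwp.neg.congr fun w => ?_
      ring
  · filter_upwards [eventually_le_norm_latticePoint hτ (4 * R)] with w hw s hs
    obtain ⟨h1, h2, h3⟩ := hUsub hs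
    have h4 := half_norm_latticePoint_le h3.le w
    have h5 : 2 * R ≤ ‖latticePoint s w‖ := by linarith
    have h6 := norm_sub_ge_half h2.le h5
    have h7 : 0 < ‖latticePoint s w‖ := by linarith
    refine ⟨(hasDerivAt_zetaReg_term w h1.hasDerivAt (norm_pos_iff.mp h7)
      (norm_pos_iff.mp (by linarith))).differentiableAt,
      (norm_zetaReg_term_le hR h2.le h5).trans ?_⟩
    have h8 : 0 < ‖latticePoint τ w‖ := by linarith
    calc 2 * R ^ 2 * (‖latticePoint s w‖ ^ 3)⁻¹
        ≤ 2 * R ^ 2 * ((‖latticePoint τ w‖ / 2) ^ 3)⁻¹ := by gcongr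
      _ = 16 * R ^ 2 * (‖latticePoint τ w‖ ^ 3)⁻¹ := by
        field_simp
        norm_num

theorem differentiableAt_zetaRegTau (hτ : 0 < τ.im)
    (hz : ∀ w : ℤ × ℤ, w ≠ 0 → z ≠ latticePoint τ w) :
    DifferentiableAt ℂ (zetaRegTau τ) z := by
  have hterm {n l v : ℂ} (hv : v - l ≠ 0) : DifferentiableAt ℂ
      (fun v => n * ((v - l)⁻¹ ^ 2 - l⁻¹ ^ 2 - 2 * v * l⁻¹ ^ 3)) v := by
    have : DifferentiableAt ℂ (fun v => (v - l)⁻¹) v :=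
      DifferentiableAt.inv (by fun_prop) hv
    fun_prop
  set R := ‖z‖ + 1 with hRdef
  have hR : 0 < R := by positivity
  refine (hasDerivAt_tsum_of_cofinite_bound (U := Metric.ball 0 R)
    (u := fun w : {w : ℤ × ℤ // w ≠ 0} => 16 * R ^ 2 / τ.im * (‖latticePoint τ w‖ ^ 3)⁻¹)
    (((summable_norm_latticePoint_pow hτ).subtype _).mul_left _) Metric.isOpen_ball
    (by simp [hRdef]) ?_
    fun w => (hterm (sub_ne_zero.mpr (hz w w.2))).hasDerivAt).2.differentiableAt
  filter_upwards [eventually_le_norm_latticePoint hτ (2 * R)] with w hw v hv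
  have hv' : ‖v‖ ≤ R := by
    rw [mem_ball_zero_iff] at hv
    exact hv.le
  have hvl := norm_sub_ge_half hv' hw
  refine ⟨hterm (norm_pos_iff.mp (by linarith)), norm_zetaRegTau_term_le hτ hR hv' hw ?_⟩
  have := abs_im_mul_le_norm_latticePoint τ w
  rwa [abs_of_pos hτ, ← Complex.norm_intCast] at this

end Derivatives

theorem zetaReg_zero (τ : ℂ) : zetaReg τ 0 = 0 := by simp [zetaReg]

theorem zetaRegTau_zero (τ : ℂ) : zetaRegTau τ 0 = 0 := by simp [zetaRegTau]

theorem inLattice_latticePoint (τ : ℂ) (w : ℤ × ℤ) : InLattice τ (latticePoint τ w) :=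
  ⟨w.1, w.2, rfl⟩

theorem ne_latticePoint_of_not_inLattice {τ z : ℂ} (hz : ¬ InLattice τ z) (w : ℤ × ℤ) :
    z ≠ latticePoint τ w := by
  rintro rfl
  exact hz (inLattice_latticePoint τ w)

theorem ne_zero_of_not_inLattice {τ z : ℂ} (hz : ¬ InLattice τ z) : z ≠ 0 := by
  rintro rfl
  exact hz (InLattice.zero τ)

/-- A function with zero derivative off the lattice takes a single value there. -/
theorem apply_eq_apply_of_hasDerivAt_zero {τ : ℂ} (hτ : 0 < τ.im) {f : ℂ → ℂ}
    (hf : ∀ z, ¬ InLattice τ z → HasDerivAt f 0 z) {z w : ℂ} (hz : ¬ InLattice τ z)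
    (hw : ¬ InLattice τ w) : f z = f w :=
  (isOpen_setOf_not_inLattice hτ).is_const_of_deriv_eq_zero
    (isPreconnected_setOf_not_inLattice τ)
    (fun v hv => (hf v hv).differentiableAt.differentiableWithinAt)
    (fun v hv => (hf v hv).deriv) hz hw

theorem latticePoint_ne_origin {τ : ℂ} (hτ : 0 < τ.im) (w : ℤ × ℤ) (hw : w ≠ 0) :
    0 ≠ latticePoint τ w :=
  (latticePoint_ne_zero hτ hw).symm

theorem exists_not_inLattice {τ : ℂ} (hτ : 0 < τ.im) : ∃ z, ¬ InLattice τ z :=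
  (eventually_punctured_not_inLattice hτ 0).exists

section Zeta

variable {zeta : ℂ → ℂ → ℂ} {τ : ℂ}

theorem IsWeierstrassZeta.eq_inv_add_zetaReg (hzeta : IsWeierstrassZeta zeta) (hτ : 0 < τ.im)
    {z : ℂ} (hz : ¬ InLattice τ z) : zeta τ z = z⁻¹ + zetaReg τ z := by
  obtain ⟨-, hd, hlim⟩ := hzeta τ hτ
  have hconst (w : ℂ) (hw : ¬ InLattice τ w) :
      HasDerivAt (fun w => zeta τ w - (w⁻¹ + zetaReg τ w)) 0 w := by
    have := (hd w hw).sub ((hasDerivAt_inv (ne_zero_of_not_inLattice hw)).add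
      (hasDerivAt_zetaReg hτ fun v _ => ne_latticePoint_of_not_inLattice hw v))
    refine this.congr_deriv ?_
    rw [inv_pow]
    ring
  have h0 : Tendsto (fun w => zeta τ w - (w⁻¹ + zetaReg τ w)) (𝓝[≠] 0) (𝓝 0) := by
    have hc := (hasDerivAt_zetaReg hτ (latticePoint_ne_origin hτ)).continuousAt.tendsto
    rw [zetaReg_zero] at hc
    have := hlim.sub (hc.mono_left nhdsWithin_le_nhds)
    simp only [sub_zero] at this
    refine this.congr fun w => ?_
    ring
  have h1 : Tendsto (fun w => zeta τ w - (w⁻¹ + zetaReg τ w)) (𝓝[≠] 0)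
      (𝓝 (zeta τ z - (z⁻¹ + zetaReg τ z))) := by
    refine tendsto_const_nhds.congr' ?_
    filter_upwards [eventually_punctured_not_inLattice hτ 0] with w hw
    exact apply_eq_apply_of_hasDerivAt_zero hτ hconst hz hw
  exact sub_eq_zero.mp (tendsto_nhds_unique h1 h0)

theorem IsWeierstrassZeta.add_sub_eq (hzeta : IsWeierstrassZeta zeta) (hτ : 0 < τ.im) {l : ℂ}
    (hl : InLattice τ l) {z w : ℂ} (hz : ¬ InLattice τ z) (hw : ¬ InLattice τ w) :
    zeta τ (z + l) - zeta τ z = zeta τ (w + l) - zeta τ w := by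
  obtain ⟨-, hd, -⟩ := hzeta τ hτ
  refine apply_eq_apply_of_hasDerivAt_zero hτ (f := fun z => zeta τ (z + l) - zeta τ z)
    (fun v hv => ?_) hz hw
  have := ((hd (v + l) (mt (inLattice_add_iff hl).mp hv)).comp_add_const v l).sub (hd v hv)
  refine this.congr_deriv ?_
  rw [wp_add_lattice hτ hl]
  ring

theorem IsWeierstrassZeta.exists_isEta2 (hzeta : IsWeierstrassZeta zeta) :
    ∃ eta2, IsEta2 zeta eta2 := by
  classical
  refine ⟨fun s => if h : 0 < s.im then
    zeta s ((exists_not_inLattice h).choose + s) - zeta s (exists_not_inLattice h).choose else 0,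
    fun s hs z hz => ?_⟩
  simp only [hs, dite_true]
  exact hzeta.add_sub_eq hs (InLattice.self s) (exists_not_inLattice hs).choose_spec hz

theorem eventually_param_not_inLattice (hτ : 0 < τ.im) {g : ℂ → ℂ} (hg : ContinuousAt g τ)
    (h : ¬ InLattice τ (g τ)) : ∀ᶠ s in 𝓝 τ, ¬ InLattice s (g s) := by
  set R := ‖g τ‖ + 1 with hRdef
  have hfin := eventually_le_norm_latticePoint hτ (4 * R)
  rw [eventually_cofinite] at hfin
  have hne (w : ℤ × ℤ) : ∀ᶠ s in 𝓝 τ, g s ≠ latticePoint s w := by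
    have hc : ContinuousAt (fun s => g s - latticePoint s w) τ := by
      unfold latticePoint
      fun_prop
    filter_upwards [hc.eventually_ne (sub_ne_zero.mpr (ne_latticePoint_of_not_inLattice h w))]
      with s hs
    exact sub_ne_zero.mp hs
  filter_upwards [hg.norm.eventually_lt_const (show ‖g τ‖ < R by simp [hRdef]),
    Metric.ball_mem_nhds τ (half_pos hτ), hne 0,
    (hfin.eventually_all (l := 𝓝 τ)).mpr fun w _ => hne w.1] with s h1 h2 h3 h4 hmem
  obtain ⟨a, b, hab⟩ := hmem
  have hs : g s = latticePoint s (a, b) := hab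
  by_cases h0 : (a, b) = (0 : ℤ × ℤ)
  · exact h3 (h0 ▸ hs)
  by_cases hbig : 4 * R ≤ ‖latticePoint τ (a, b)‖
  · have h5 := half_norm_latticePoint_le (s := s) (τ := τ)
      (by simpa [dist_eq_norm] using (Metric.mem_ball.mp h2).le) (a, b)
    rw [← hs] at h5
    have : 0 < R := by positivity
    linarith
  · exact h4 ⟨(a, b), h0⟩ hbig hs

/-- The chain rule for the Weierstrass zeta function along a curve `τ ↦ (τ, g τ)`. -/
theorem IsWeierstrassZeta.hasDerivAt_comp (hzeta : IsWeierstrassZeta zeta) (hτ : 0 < τ.im)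
    {g : ℂ → ℂ} {g' : ℂ} (hgd : ∀ᶠ s in 𝓝 τ, DifferentiableAt ℂ g s) (hg : HasDerivAt g g' τ)
    (h : ¬ InLattice τ (g τ)) :
    HasDerivAt (fun s => zeta s (g s)) (zetaRegTau τ (g τ) - g' * wp τ (g τ)) τ := by
  have H := (hg.inv (ne_zero_of_not_inLattice h)).add
    (hasDerivAt_zetaReg_comp hτ hgd hg fun w _ => ne_latticePoint_of_not_inLattice h w)
  have him : ∀ᶠ s : ℂ in 𝓝 τ, 0 < s.im := Complex.continuous_im.continuousAt.eventually_const_lt hτ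
  refine (H.congr_of_eventuallyEq ?_).congr_deriv ?_
  · filter_upwards [him, eventually_param_not_inLattice hτ hg.continuousAt h] with s hs hgs
    exact hzeta.eq_inv_add_zetaReg hs hgs
  · rw [inv_pow]
    ring

theorem IsWeierstrassZeta.zetaRegTau_add_one (hzeta : IsWeierstrassZeta zeta) {eta1 : ℂ → ℂ}
    (heta1 : IsEta1 zeta eta1) (hτ : 0 < τ.im) : ∃ a, ∀ z, ¬ InLattice τ z →
      zetaRegTau τ (z + 1) = zetaRegTau τ z + a := by
  refine ⟨deriv eta1 τ, fun z hz => ?_⟩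
  have h1 := hzeta.hasDerivAt_comp hτ (g := fun _ => z + 1) (by simp) (hasDerivAt_const τ _)
    (mt (inLattice_add_iff (InLattice.one τ)).mp hz)
  have h2 := hzeta.hasDerivAt_comp hτ (g := fun _ => z) (by simp) (hasDerivAt_const τ _) hz
  have him : ∀ᶠ s : ℂ in 𝓝 τ, 0 < s.im := Complex.continuous_im.continuousAt.eventually_const_lt hτ
  have h3 : HasDerivAt eta1 _ τ := (h1.sub h2).congr_of_eventuallyEq <| by
    filter_upwards [him, eventually_param_not_inLattice hτ continuousAt_const hz] with s hs hzs
    exact heta1 s hs z hzs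
  rw [h3.deriv]
  ring

theorem IsWeierstrassZeta.zetaRegTau_add_self (hzeta : IsWeierstrassZeta zeta) {eta2 : ℂ → ℂ}
    (heta2 : IsEta2 zeta eta2) (hτ : 0 < τ.im) : ∃ b, ∀ z, ¬ InLattice τ z →
      zetaRegTau τ (z + τ) = zetaRegTau τ z + wp τ z + b := by
  refine ⟨deriv eta2 τ, fun z hz => ?_⟩
  have h1 := hzeta.hasDerivAt_comp hτ (g := fun s => z + s) (.of_forall fun s => by fun_prop)
    ((hasDerivAt_id τ).const_add z) (mt (inLattice_add_iff (InLattice.self τ)).mp hz)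
  have h2 := hzeta.hasDerivAt_comp hτ (g := fun _ => z) (by simp) (hasDerivAt_const τ _) hz
  have him : ∀ᶠ s : ℂ in 𝓝 τ, 0 < s.im := Complex.continuous_im.continuousAt.eventually_const_lt hτ
  have h3 : HasDerivAt eta2 _ τ := (h1.sub h2).congr_of_eventuallyEq <| by
    filter_upwards [him, eventually_param_not_inLattice hτ continuousAt_const hz] with s hs hzs
    exact heta2 s hs z hzs
  rw [h3.deriv, wp_add_lattice hτ (InLattice.self τ)]
  ring

end Zeta

theorem integral_exp_div_one_sub_exp {b c : ℂ} (hb : exp b = 1) (hc : ∀ x : ℝ, (b * x + c).re < 0)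
    (a : ℝ) : ∫ x in a..(a + 1), b * exp (b * x + c) / (1 - exp (b * x + c)) = 0 := by
  have hnorm (x : ℝ) : ‖exp (b * x + c)‖ < 1 := by
    rw [Complex.norm_exp]
    exact (Real.exp_lt_exp.mpr (hc x)).trans_eq Real.exp_zero
  have hmem (x : ℝ) : 1 - exp (b * x + c) ∈ slitPlane := by
    left
    have := (Complex.re_le_norm (exp (b * x + c))).trans_lt (hnorm x)
    simpa using this
  have hd (x : ℝ) : HasDerivAt (fun x : ℝ => -log (1 - exp (b * x + c)))
      (b * exp (b * x + c) / (1 - exp (b * x + c))) x := by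
    have h1 : HasDerivAt (fun x : ℝ => b * (x : ℂ) + c) b x := by
      simpa using ((Complex.ofRealCLM.hasDerivAt (x := x)).const_mul b).add_const c
    have h2 := ((h1.cexp.const_sub 1).clog_real (hmem x)).neg
    refine h2.congr_deriv ?_
    ring
  rw [intervalIntegral.integral_eq_sub_of_hasDerivAt (fun x _ => hd x)]
  · have : exp (b * ((a + 1 : ℝ) : ℂ) + c) = exp (b * a + c) := by
      rw [show b * ((a + 1 : ℝ) : ℂ) + c = b * a + c + b by push_cast; ring, exp_add, hb, mul_one]
    rw [this, sub_self]
  · refine Continuous.intervalIntegrable ?_ _ _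
    refine Continuous.div (by fun_prop) (by fun_prop) fun x => slitPlane_ne_zero (hmem x)

noncomputable section

/-- The `1`-periodic function `2πi / (e^{2πiz} - 1)`, with residue `1` at the integers. -/
def expPole (z : ℂ) : ℂ := 2 * π * I / (exp (2 * π * I * z) - 1)

end

theorem expPole_add_one (z : ℂ) : expPole (z + 1) = expPole z := by
  simp only [expPole, mul_add, mul_one, exp_add, exp_two_pi_mul_I]

theorem norm_exp_two_pi_mul_I_mul (z : ℂ) :
    ‖exp (2 * π * I * z)‖ = Real.exp (-(2 * π * z.im)) := by
  rw [Complex.norm_exp]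
  simp

theorem exp_two_pi_sub_one_ne_zero {z : ℂ} (hz : z.im ≠ 0) : exp (2 * π * I * z) - 1 ≠ 0 := by
  intro h
  have h1 := norm_exp_two_pi_mul_I_mul z
  rw [sub_eq_zero.mp h, norm_one, eq_comm, Real.exp_eq_one_iff] at h1
  have := Real.pi_pos
  apply hz
  nlinarith

theorem integral_expPole_of_pos {y : ℝ} (hy : 0 < y) (a : ℝ) :
    ∫ x in a..(a + 1), expPole (x + y * I) = -(2 * π * I) := by
  have h0 := integral_exp_div_one_sub_exp (b := 2 * π * I) (c := 2 * π * I * (y * I))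
    exp_two_pi_mul_I (fun x => by simp; positivity) a
  have hne (x : ℝ) : exp (2 * π * I * (x + y * I)) - 1 ≠ 0 :=
    exp_two_pi_sub_one_ne_zero (by simpa using hy.ne')
  have h1 (x : ℝ) : expPole (x + y * I) = -(2 * π * I) - 2 * π * I *
      exp (2 * π * I * x + 2 * π * I * (y * I)) /
        (1 - exp (2 * π * I * x + 2 * π * I * (y * I))) := by
    have := hne x
    rw [mul_add] at this
    rw [expPole, mul_add]
    have h2 := this
    rw [← neg_ne_zero, neg_sub] at h2
    generalize exp (2 * π * I * x + 2 * π * I * (y * I)) = q at *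
    field_simp
    ring
  have hcont : Continuous fun x : ℝ => 2 * π * I *
      exp (2 * π * I * x + 2 * π * I * (y * I)) /
        (1 - exp (2 * π * I * x + 2 * π * I * (y * I))) := by
    refine Continuous.div (by fun_prop) (by fun_prop) fun x => ?_
    have := hne x
    rw [← neg_ne_zero, neg_sub, mul_add] at this
    exact this
  simp_rw [h1]
  rw [intervalIntegral.integral_sub (by simp) (hcont.intervalIntegrable _ _), h0]
  simp

theorem integral_expPole_of_neg {y : ℝ} (hy : y < 0) (a : ℝ) :
    ∫ x in a..(a + 1), expPole (x + y * I) = 0 := by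
  have hb : exp (-(2 * π * I)) = 1 := by rw [exp_neg, exp_two_pi_mul_I, inv_one]
  have h0 := integral_exp_div_one_sub_exp (b := -(2 * π * I)) (c := -(2 * π * I) * (y * I))
    hb (fun x => by simp; nlinarith [Real.pi_pos]) a
  have h1 (x : ℝ) : expPole (x + y * I) = -(-(2 * π * I) *
      exp (-(2 * π * I) * x + -(2 * π * I) * (y * I)) /
        (1 - exp (-(2 * π * I) * x + -(2 * π * I) * (y * I)))) := by
    have hne : exp (2 * π * I * (x + y * I)) - 1 ≠ 0 :=
      exp_two_pi_sub_one_ne_zero (by simpa using hy.ne)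
    have he := exp_ne_zero (2 * π * I * (x + y * I))
    rw [expPole, ← mul_add, neg_mul (2 * π * I) (x + y * I), exp_neg]
    generalize exp (2 * π * I * (x + y * I)) = q at *
    have : 1 - q⁻¹ ≠ 0 := by
      intro h
      apply hne
      rw [sub_eq_zero] at h ⊢
      rw [← inv_inv q, ← h, inv_one]
    field_simp
  simp_rw [h1]
  rw [intervalIntegral.integral_neg, h0, neg_zero]

theorem exists_tendsto_expPole_sub_inv :
    ∃ l, Tendsto (fun z => expPole z - z⁻¹) (𝓝[≠] 0) (𝓝 l) := by
  set E : ℂ → ℂ := fun z => exp (2 * π * I * z)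
  have hE : Differentiable ℂ E := by fun_prop
  have hD : DifferentiableAt ℂ (dslope E 0) 0 :=
    (((Complex.differentiableOn_dslope univ_mem).mpr hE.differentiableOn).differentiableAt
      univ_mem)
  have hval : dslope E 0 0 = 2 * π * I := by
    rw [dslope_same]
    have : HasDerivAt E _ 0 := ((hasDerivAt_id (0 : ℂ)).const_mul (2 * π * I)).cexp
    rw [this.deriv]
    simp
  have hne : (2 * π * I : ℂ) ≠ 0 := two_pi_I_ne_zero
  have hG : DifferentiableAt ℂ (fun z => 2 * π * I / dslope E 0 z) 0 :=
    (differentiableAt_const _).div hD (by rwa [hval])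
  refine ⟨_, hG.hasDerivAt.tendsto_slope.congr' ?_⟩
  filter_upwards [self_mem_nhdsWithin,
    (hD.continuousAt.eventually_ne (by rwa [hval])).filter_mono nhdsWithin_le_nhds] with z hz hDz
  have hz0 : z ≠ 0 := hz
  rw [slope_def_field, hval, div_self hne, expPole]
  rw [dslope_of_ne _ hz0, slope_def_field] at hDz ⊢
  have h0 : E 0 = 1 := by simp [E]
  rw [h0, sub_zero] at hDz ⊢
  change _ = 2 * π * I / (E z - 1) - z⁻¹
  have : E z - 1 ≠ 0 := fun h => hDz (by simp [h])
  field_simp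

theorem InLattice.eq_zero_of_abs_lt {τ z : ℂ} (hτ : 0 < τ.im) (hz : InLattice τ z)
    (hre : |z.re| < 1) (him : |z.im| < τ.im) : z = 0 := by
  obtain ⟨m, n, rfl⟩ := hz
  have h1 : |(n : ℝ)| < 1 := by
    have : |(n : ℝ)| * τ.im < 1 * τ.im := by
      simpa [abs_mul, abs_of_pos hτ] using him
    exact lt_of_mul_lt_mul_right this hτ.le
  have hn : n = 0 := Int.abs_lt_one_iff.mp (by exact_mod_cast h1)
  subst hn
  have hm : m = 0 := Int.abs_lt_one_iff.mp (by
    have : |(m : ℝ)| < 1 := by simpa using hre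
    exact_mod_cast this)
  simp [hm]

theorem not_inLattice_of_two_mul_abs_im_eq {τ z : ℂ} (hτ : 0 < τ.im) (him : 2 * |z.im| = τ.im) :
    ¬ InLattice τ z := by
  rintro ⟨m, n, rfl⟩
  have h1 : (2 * |(n : ℝ)|) * τ.im = 1 * τ.im := by
    simpa [abs_mul, abs_of_pos hτ, mul_assoc] using him
  have h2 : 2 * |(n : ℝ)| = 1 := mul_right_cancel₀ hτ.ne' h1
  have h3 : 2 * |n| = 1 := by exact_mod_cast h2
  omega

theorem differentiableAt_expPole {z : ℂ} (h : exp (2 * π * I * z) ≠ 1) :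
    DifferentiableAt ℂ expPole z := by
  unfold expPole
  exact DifferentiableAt.div (by fun_prop) (by fun_prop) (sub_ne_zero.mpr h)

theorem exp_two_pi_mul_ne_one {τ z : ℂ} (hz : ¬ InLattice τ z) : exp (2 * π * I * z) ≠ 1 := by
  intro h
  obtain ⟨n, hn⟩ := Complex.exp_eq_one_iff.mp h
  refine hz ⟨n, 0, ?_⟩
  have : 2 * π * I * z = 2 * π * I * n := by rw [hn]; ring
  simpa using mul_left_cancel₀ two_pi_I_ne_zero this

/-- A function with a simple pole of residue `1` at each lattice point, which has period `1`
and is quasi-periodic along `τ`, has additive quasi-period `-2πi`. -/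
theorem quasiperiod_eq_of_simple_pole {τ L l : ℂ} (hτ : 0 < τ.im) {φ : ℂ → ℂ}
    (hd : ∀ z, ¬ InLattice τ z → DifferentiableAt ℂ φ z)
    (h1 : ∀ z, ¬ InLattice τ z → φ (z + 1) = φ z)
    (h2 : ∀ z, ¬ InLattice τ z → φ (z + τ) = φ z + L)
    (hpole : Tendsto (fun z => φ z - z⁻¹) (𝓝[≠] 0) (𝓝 l)) : L = -(2 * π * I) := by
  set ψ : ℂ → ℂ := fun z => φ z - expPole z with hψ
  have hψd (z : ℂ) (hz : ¬ InLattice τ z) : DifferentiableAt ℂ ψ z :=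
    (hd z hz).sub (differentiableAt_expPole (exp_two_pi_mul_ne_one hz))
  set U : Set ℂ := {z | |z.re| < 1 ∧ |z.im| < τ.im} with hU
  have hUo : IsOpen U :=
    (isOpen_lt Complex.continuous_re.abs continuous_const).and
      (isOpen_lt Complex.continuous_im.abs continuous_const)
  have hUl (z : ℂ) (hz : z ∈ U) (hz0 : z ≠ 0) : ¬ InLattice τ z :=
    fun h => hz0 (h.eq_zero_of_abs_lt hτ hz.1 hz.2)
  obtain ⟨F, hF, hFψ⟩ := exists_differentiableOn_tendsto_punctured (f := ψ) hUo
    (fun z hz => by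
      by_cases hz0 : z = 0
      · subst hz0
        obtain ⟨k, hk⟩ := exists_tendsto_expPole_sub_inv
        refine ⟨l - k, (hpole.sub hk).congr fun z => ?_⟩
        simp only [hψ]
        ring
      · exact ⟨_, (hψd z (hUl z hz hz0)).continuousAt.tendsto.mono_left nhdsWithin_le_nhds⟩)
    (fun z _ => (eventually_punctured_not_inLattice hτ z).mono hψd)
  have hFeq (z : ℂ) (hz : z ∈ U) (hz0 : z ≠ 0) : F z = ψ z :=
    tendsto_nhds_unique (hFψ z hz)
      ((hψd z (hUl z hz hz0)).continuousAt.tendsto.mono_left nhdsWithin_le_nhds)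
  set t : ℝ := τ.im / 2 with ht
  have ht0 : 0 < t := half_pos hτ
  have hrect := Complex.integral_boundary_rect_eq_zero_of_differentiableOn F
    ⟨-1 / 2, -t⟩ ⟨-1 / 2 + 1, t⟩ (hF.mono fun z hz => by
      rw [Complex.mem_reProdIm, Set.uIcc_of_le (by norm_num), Set.uIcc_of_le (by linarith)] at hz
      obtain ⟨⟨a1, a2⟩, b1, b2⟩ := hz
      refine ⟨abs_lt.mpr ⟨?_, ?_⟩, abs_lt.mpr ⟨?_, ?_⟩⟩ <;> simp only at * <;> linarith)
  simp only at hrect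
  have hside : ∫ y : ℝ in -t..t, F ((-1 / 2 + 1 : ℝ) + y * I) =
      ∫ y : ℝ in -t..t, F ((-1 / 2 : ℝ) + y * I) := by
    refine intervalIntegral.integral_congr fun y hy => ?_
    rw [Set.uIcc_of_le (by linarith)] at hy
    have hyt : |y| < τ.im := abs_lt.mpr ⟨by linarith [hy.1], by linarith [hy.2]⟩
    have m1 : ((-1 / 2 : ℝ) + y * I : ℂ) ∈ U := by
      refine ⟨?_, by simpa using hyt⟩
      rw [abs_lt]
      constructor <;> simp <;> norm_num
    have m2 : ((-1 / 2 + 1 : ℝ) + y * I : ℂ) ∈ U := by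
      refine ⟨?_, by simpa using hyt⟩
      rw [abs_lt]
      constructor <;> simp <;> norm_num
    have n1 : ((-1 / 2 : ℝ) + y * I : ℂ) ≠ 0 := fun h => by
      have := congrArg Complex.re h
      norm_num at this
    have n2 : ((-1 / 2 + 1 : ℝ) + y * I : ℂ) ≠ 0 := fun h => by
      have := congrArg Complex.re h
      norm_num at this
    have e : ((-1 / 2 + 1 : ℝ) + y * I : ℂ) = ((-1 / 2 : ℝ) + y * I) + 1 := by
      push_cast
      ring
    rw [hFeq _ m1 n1, hFeq _ m2 n2, e]
    simp only [hψ]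
    rw [h1 _ (hUl _ m1 n1), expPole_add_one]
  have hline {y : ℝ} (hy : 2 * |y| = τ.im) (x : ℝ) : ¬ InLattice τ (x + y * I) :=
    not_inLattice_of_two_mul_abs_im_eq hτ (by simpa using hy)
  have hφc {y : ℝ} (hy : 2 * |y| = τ.im) : Continuous fun x : ℝ => φ (x + y * I) :=
    continuous_iff_continuousAt.mpr fun x =>
      ContinuousAt.comp (f := fun x : ℝ => (x + y * I : ℂ)) (hd _ (hline hy x)).continuousAt
        (by fun_prop)
  have hκc {y : ℝ} (hy : 2 * |y| = τ.im) : Continuous fun x : ℝ => expPole (x + y * I) :=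
    continuous_iff_continuousAt.mpr fun x =>
      ContinuousAt.comp (f := fun x : ℝ => (x + y * I : ℂ))
        (differentiableAt_expPole (exp_two_pi_mul_ne_one (hline hy x))).continuousAt (by fun_prop)
  have hFint {y : ℝ} (hy : 2 * |y| = τ.im) :
      ∫ x : ℝ in (-1 / 2)..(-1 / 2 + 1), F (x + y * I) =
        (∫ x : ℝ in (-1 / 2)..(-1 / 2 + 1), φ (x + y * I)) -
          ∫ x : ℝ in (-1 / 2)..(-1 / 2 + 1), expPole (x + y * I) := by
    rw [← intervalIntegral.integral_sub ((hφc hy).intervalIntegrable _ _)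
      ((hκc hy).intervalIntegrable _ _)]
    refine intervalIntegral.integral_congr fun x hx => ?_
    rw [Set.uIcc_of_le (by norm_num)] at hx
    refine hFeq _ ⟨?_, ?_⟩ (ne_zero_of_not_inLattice (hline hy x))
    · rw [abs_lt]
      constructor <;> simp <;> linarith [hx.1, hx.2]
    · have : |y| < τ.im := by linarith
      simpa using this
  have hyp : 2 * |t| = τ.im := by rw [abs_of_pos ht0]; linarith
  have hyn : 2 * |-t| = τ.im := by rwa [abs_neg]
  have hshift : ∫ x : ℝ in (-1 / 2)..(-1 / 2 + 1), φ (x + t * I) =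
      (∫ x : ℝ in (-1 / 2)..(-1 / 2 + 1), φ (x + (-t : ℝ) * I)) + L := by
    have hpt (x : ℝ) : φ (x + t * I) = φ ((x - τ.re : ℝ) + (-t : ℝ) * I) + L := by
      rw [← h2 _ (hline hyn _)]
      congr 1
      apply Complex.ext <;> simp [ht]
      ring
    simp_rw [hpt]
    rw [intervalIntegral.integral_add _ (by simp)]
    · rw [intervalIntegral.integral_comp_sub_right (fun x : ℝ => φ (x + (-t : ℝ) * I)) τ.re,
        show (-1 / 2 + 1 - τ.re : ℝ) = -1 / 2 - τ.re + 1 by ring]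
      have hper : Function.Periodic (fun x : ℝ => φ (x + (-t : ℝ) * I)) 1 := fun x => by
        simp only
        rw [← h1 _ (hline hyn x)]
        congr 1
        push_cast
        ring
      rw [hper.intervalIntegral_add_eq _ (-1 / 2)]
      simp
    · exact ((hφc hyn).comp (continuous_id.sub continuous_const)).intervalIntegrable _ _
  rw [hside, hFint hyp, hFint hyn, integral_expPole_of_pos ht0,
    integral_expPole_of_neg (neg_lt_zero.mpr ht0), hshift] at hrect
  linear_combination -hrect

/-- The Legendre relation. -/
theorem IsWeierstrassZeta.legendre {zeta : ℂ → ℂ → ℂ} {eta1 eta2 : ℂ → ℂ}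
    (hzeta : IsWeierstrassZeta zeta) (heta1 : IsEta1 zeta eta1) (heta2 : IsEta2 zeta eta2)
    {τ : ℂ} (hτ : 0 < τ.im) : eta2 τ - τ * eta1 τ = -(2 * π * I) := by
  obtain ⟨-, hd, hlim⟩ := hzeta τ hτ
  refine quasiperiod_eq_of_simple_pole (l := 0) hτ (φ := fun z => zeta τ z - eta1 τ * z)
    (fun z hz => (hd z hz).differentiableAt.sub (by fun_prop)) (fun z hz => ?_) (fun z hz => ?_) ?_
  · linear_combination -heta1 τ hτ z hz
  · linear_combination -heta2 τ hτ z hz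
  · have hc : Tendsto (fun z : ℂ => eta1 τ * z) (𝓝[≠] 0) (𝓝 0) :=
      (Continuous.tendsto' (by fun_prop) _ _ (by simp)).mono_left nhdsWithin_le_nhds
    have := hlim.sub hc
    rw [sub_zero] at this
    refine this.congr fun z => ?_
    ring

theorem add_int_mul_of_quasiperiodic {τ ω a : ℂ} {f : ℂ → ℂ} (hω : InLattice τ ω)
    (h : ∀ z, ¬ InLattice τ z → f (z + ω) = f z + a) (m : ℤ) :
    ∀ z, ¬ InLattice τ z → f (z + m * ω) = f z + m * a := by
  induction m using Int.induction_on with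
  | zero => simp
  | succ i ih =>
    intro z hz
    rw [show z + ((i + 1 : ℤ) : ℂ) * ω = z + ω + (i : ℤ) * ω by push_cast; ring,
      ih _ (mt (inLattice_add_iff hω).mp hz), h z hz]
    push_cast
    ring
  | pred i ih =>
    intro z hz
    have hz' : ¬ InLattice τ (z + -ω) := mt (inLattice_add_iff hω.neg).mp hz
    have h1 := h _ hz'
    rw [neg_add_cancel_right] at h1
    rw [show z + ((-i - 1 : ℤ) : ℂ) * ω = z + -ω + (-i : ℤ) * ω by push_cast; ring, ih _ hz', h1]
    push_cast
    ring

theorem eq_affine_of_quasiperiodic_of_tendsto {τ a b d : ℂ} (hτ : 0 < τ.im) {f : ℂ → ℂ}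
    (hd : ∀ z, ¬ InLattice τ z → DifferentiableAt ℂ f z)
    (h1 : ∀ z, ¬ InLattice τ z → f (z + 1) = f z + a)
    (h2 : ∀ z, ¬ InLattice τ z → f (z + τ) = f z + b)
    (h0 : Tendsto f (𝓝[≠] 0) (𝓝 d)) {z : ℂ} (hz : ¬ InLattice τ z) : f z = a * z + d := by
  obtain ⟨d', h⟩ := exists_affine_of_quasiperiodic hτ (f := f) (a := a) (b := b)
    (fun z => by
      by_cases hz : InLattice τ z
      · obtain ⟨m, n, rfl⟩ := hz
        have hs := tendsto_add_const_punctured ((m : ℂ) + n * τ) (-((m : ℂ) + n * τ))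
        rw [add_neg_cancel] at hs
        refine ⟨d + (m * a + n * b), ((h0.comp hs).add_const _).congr' ?_⟩
        filter_upwards [eventually_punctured_not_inLattice hτ _] with w hw
        have hw' : ¬ InLattice τ (w + -((m : ℂ) + n * τ)) :=
          mt (inLattice_add_iff (InLattice.neg ⟨m, n, rfl⟩)).mp hw
        have e1 := add_int_mul_of_quasiperiodic (InLattice.one τ) h1 m _ hw'
        have e2 := add_int_mul_of_quasiperiodic (InLattice.self τ) h2 n
          (w + -((m : ℂ) + n * τ) + m * 1)
          (mt (inLattice_add_iff ⟨m, 0, by simp⟩).mp hw')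
        rw [e1, show w + -((m : ℂ) + n * τ) + m * 1 + n * τ = w by ring] at e2
        rw [e2, Function.comp_apply, add_assoc]
      · exact ⟨_, (hd z hz).continuousAt.tendsto.mono_left nhdsWithin_le_nhds⟩)
    (fun z => (eventually_punctured_not_inLattice hτ z).mono hd)
    (fun z => (eventually_punctured_not_inLattice hτ z).mono h1)
    (fun z => (eventually_punctured_not_inLattice hτ z).mono h2)
  have e0 := tendsto_nhds_unique (h 0) h0
  rw [mul_zero, zero_add] at e0
  subst e0
  exact tendsto_nhds_unique
    ((hd z hz).continuousAt.tendsto.mono_left nhdsWithin_le_nhds) (h z)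

theorem eventually_hasDerivAt_zetaReg {τ : ℂ} (hτ : 0 < τ.im) :
    ∀ᶠ z in 𝓝 0, HasDerivAt (zetaReg τ) (-(wp τ z - z⁻¹ ^ 2)) z := by
  have h := eventually_punctured_not_inLattice hτ 0
  rw [eventually_nhdsWithin_iff] at h
  filter_upwards [h] with z hz
  by_cases hz0 : z = 0
  · rw [hz0]
    exact hasDerivAt_zetaReg hτ (latticePoint_ne_origin hτ)
  · exact hasDerivAt_zetaReg hτ fun w _ => ne_latticePoint_of_not_inLattice (hz hz0) w

theorem isLittleO_zetaReg {τ : ℂ} (hτ : 0 < τ.im) :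
    zetaReg τ =o[𝓝 0] fun z => z ^ 2 := by
  obtain ⟨P, hP, hP0, hP1, hwp⟩ := exists_regular_part_wp hτ
  have hPo : P =o[𝓝 0] fun z => z := by
    have := hP.differentiableAt.hasDerivAt
    rw [hP1, hasDerivAt_iff_isLittleO] at this
    simpa [hP0] using this
  refine isLittleO_iff.mpr fun ε hε => ?_
  obtain ⟨r, hr, hball⟩ := Metric.eventually_nhds_iff_ball.mp
    ((eventually_hasDerivAt_zetaReg hτ).and (isLittleO_iff.mp hPo hε))
  filter_upwards [Metric.ball_mem_nhds 0 hr] with z hz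
  have hsub (w : ℂ) (hw : w ∈ Metric.closedBall (0 : ℂ) ‖z‖) : w ∈ Metric.ball (0 : ℂ) r := by
    rw [mem_closedBall_zero_iff] at hw
    rw [mem_ball_zero_iff] at hz ⊢
    exact hw.trans_lt hz
  have := (convex_closedBall (0 : ℂ) ‖z‖).norm_image_sub_le_of_norm_hasDerivWithin_le
    (f := zetaReg τ) (C := ε * ‖z‖) (fun w hw => (hball w (hsub w hw)).1.hasDerivWithinAt)
    (fun w hw => by
      rw [hwp, add_sub_cancel_left, norm_neg]
      refine (hball w (hsub w hw)).2.trans ?_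
      rw [mem_closedBall_zero_iff] at hw
      gcongr)
    (Metric.mem_closedBall_self (norm_nonneg z)) (by simp : z ∈ _)
  rw [zetaReg_zero, sub_zero, sub_zero] at this
  rw [norm_pow, sq]
  linarith

theorem tendsto_zetaReg_div_sq {τ : ℂ} (hτ : 0 < τ.im) :
    Tendsto (fun z => zetaReg τ z / z ^ 2) (𝓝[≠] 0) (𝓝 0) :=
  (isLittleO_zetaReg hτ).tendsto_div_nhds_zero.mono_left nhdsWithin_le_nhds

theorem tendsto_zetaReg {τ : ℂ} (hτ : 0 < τ.im) : Tendsto (zetaReg τ) (𝓝[≠] 0) (𝓝 0) := by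
  have := (hasDerivAt_zetaReg hτ (latticePoint_ne_origin hτ)).continuousAt.tendsto
  rw [zetaReg_zero] at this
  exact this.mono_left nhdsWithin_le_nhds

theorem tendsto_id_punctured : Tendsto (fun z : ℂ => z) (𝓝[≠] 0) (𝓝 0) :=
  tendsto_id.mono_left nhdsWithin_le_nhds

section Heat

variable {zeta : ℂ → ℂ → ℂ} {τ : ℂ}

/-- The polar parts of `℘′/2 + (ζ - ηz)℘ + ηζ` at the origin cancel. -/
theorem IsWeierstrassZeta.tendsto_heat (hzeta : IsWeierstrassZeta zeta) (hτ : 0 < τ.im) (η : ℂ) :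
    Tendsto (fun z => wpd τ z / 2 + (zeta τ z - z * η) * wp τ z + η * zeta τ z)
      (𝓝[≠] 0) (𝓝 0) := by
  obtain ⟨P, hP, hP0, hP1, hwp⟩ := exists_regular_part_wp hτ
  have t1 : Tendsto (deriv P) (𝓝[≠] 0) (𝓝 0) := by
    have := hP.deriv.continuousAt.tendsto
    rw [hP1] at this
    exact this.mono_left nhdsWithin_le_nhds
  have t2 : Tendsto P (𝓝[≠] 0) (𝓝 0) := by
    have := hP.continuousAt.tendsto
    rw [hP0] at this
    exact this.mono_left nhdsWithin_le_nhds
  have t3 : Tendsto (slope P 0) (𝓝[≠] 0) (𝓝 0) := by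
    have := hP.differentiableAt.hasDerivAt.tendsto_slope
    rwa [hP1] at this
  have t4 := tendsto_zetaReg_div_sq hτ
  have t5 := tendsto_zetaReg hτ
  have t := ((((t1.div_const 2).add t3).add t4).add
    ((t5.sub (tendsto_id_punctured.mul_const η)).mul t2)).add (t5.const_mul η)
  simp only [zero_mul, sub_zero, mul_zero, add_zero, zero_div] at t
  refine t.congr' ?_
  filter_upwards [eventually_punctured_not_inLattice hτ 0,
    hP.eventually_analyticAt.filter_mono nhdsWithin_le_nhds] with z hz hPz
  have hz0 := ne_zero_of_not_inLattice hz
  have hwpd : wpd τ z = -2 * z⁻¹ ^ 3 + deriv P z := by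
    have h1 := ((hasDerivAt_inv hz0).pow 2).add hPz.differentiableAt.hasDerivAt
    have h2 : HasDerivAt (wp τ) _ z :=
      h1.congr_of_eventuallyEq (.of_forall fun w => by simpa using hwp w)
    rw [wpd, h2.deriv]
    simp
    field_simp
  rw [hwpd, hwp, hzeta.eq_inv_add_zetaReg hτ hz, slope_def_field, hP0, sub_zero, sub_zero]
  field_simp
  ring

/-- The heat-type equation for the `τ`-derivative of `ζ`, up to a multiple of `z`. -/
theorem IsWeierstrassZeta.exists_zetaRegTau_eq (hzeta : IsWeierstrassZeta zeta) {eta1 : ℂ → ℂ}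
    (heta1 : IsEta1 zeta eta1) (hτ : 0 < τ.im) : ∃ k : ℂ, ∀ z, ¬ InLattice τ z →
      zetaRegTau τ z = I / (2 * π) *
        (wpd τ z / 2 + (zeta τ z - z * eta1 τ) * wp τ z + eta1 τ * zeta τ z) + k * z := by
  obtain ⟨eta2, heta2⟩ := hzeta.exists_isEta2
  obtain ⟨a, ha⟩ := hzeta.zetaRegTau_add_one heta1 hτ
  obtain ⟨b, hb⟩ := hzeta.zetaRegTau_add_self heta2 hτ
  have hleg := hzeta.legendre heta1 heta2 hτ
  have hone : I / (2 * π) * (eta2 τ - τ * eta1 τ) = 1 := by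
    rw [hleg]
    have : (π : ℂ) ≠ 0 := by exact_mod_cast Real.pi_ne_zero
    field_simp
    simp
  have hW0 : Tendsto (zetaRegTau τ) (𝓝[≠] 0) (𝓝 0) := by
    have := (differentiableAt_zetaRegTau hτ (latticePoint_ne_origin hτ)).continuousAt.tendsto
    rw [zetaRegTau_zero] at this
    exact this.mono_left nhdsWithin_le_nhds
  have h0 := hW0.sub ((hzeta.tendsto_heat hτ (eta1 τ)).const_mul (I / (2 * π)))
  rw [mul_zero, sub_zero] at h0
  refine ⟨a - I / (2 * π) * eta1 τ ^ 2, fun z hz => ?_⟩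
  have key := eq_affine_of_quasiperiodic_of_tendsto hτ (a := a - I / (2 * π) * eta1 τ ^ 2)
    (b := b - I / (2 * π) * (eta1 τ * eta2 τ)) (fun w hw => ?_) (fun w hw => ?_) (fun w hw => ?_)
    h0 hz
  · linear_combination key
  · have d1 := differentiableAt_zetaRegTau hτ fun v _ => ne_latticePoint_of_not_inLattice hw v
    have d2 := differentiableAt_wpd hτ hw
    have d3 := (hasDerivAt_wp hτ hw).differentiableAt
    have d4 := ((hzeta τ hτ).2.1 w hw).differentiableAt
    fun_prop
  · have e := heta1 τ hτ w hw
    rw [ha w hw, wp_add_lattice hτ (InLattice.one τ), wpd_add_lattice hτ (InLattice.one τ),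
      eq_add_of_sub_eq e.symm]
    ring
  · have e := heta2 τ hτ w hw
    rw [hb w hw, wp_add_lattice hτ (InLattice.self τ), wpd_add_lattice hτ (InLattice.self τ),
      eq_add_of_sub_eq e.symm]
    linear_combination -wp τ w * hone

end Heat

section Addition

variable {zeta : ℂ → ℂ → ℂ} {τ : ℂ}

theorem IsWeierstrassZeta.tendsto_addition (hzeta : IsWeierstrassZeta zeta) (hτ : 0 < τ.im)
    {v : ℂ} (hv : ¬ InLattice τ v) :
    Tendsto (fun u => (zeta τ (u + v) - zeta τ u - zeta τ v) ^ 2 - wp τ u - wp τ (u + v))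
      (𝓝[≠] 0) (𝓝 (wp τ v)) := by
  obtain ⟨P, hP, hP0, -, hwp⟩ := exists_regular_part_wp hτ
  have hv' : ¬ InLattice τ (0 + v) := by rwa [zero_add]
  have hD : HasDerivAt (fun u => zeta τ (u + v)) (-wp τ v) 0 := by
    have := ((hzeta τ hτ).2.1 (0 + v) hv').comp_add_const 0 v
    rwa [zero_add] at this
  have t1 := hD.tendsto_slope
  have t2 := hD.continuousAt.tendsto.mono_left (nhdsWithin_le_nhds (s := {0}ᶜ))
  have t3 := tendsto_zetaReg hτ
  have t4 := (tendsto_zetaReg_div_sq hτ).mul tendsto_id_punctured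
  have t5 : Tendsto P (𝓝[≠] 0) (𝓝 0) := by
    have := hP.continuousAt.tendsto
    rw [hP0] at this
    exact this.mono_left nhdsWithin_le_nhds
  have t6 : Tendsto (fun u => wp τ (u + v)) (𝓝[≠] 0) (𝓝 (wp τ v)) := by
    have := ((hasDerivAt_wp hτ hv').comp_add_const 0 v).continuousAt.tendsto
    rw [zero_add] at this
    exact this.mono_left nhdsWithin_le_nhds
  have t := (((((t2.sub_const (zeta τ v)).sub t3).pow 2).sub (t1.const_mul 2)).add
    (t4.const_mul 2)).sub (t5.add t6)
  rw [show (zeta τ (0 + v) - zeta τ v - 0) ^ 2 - 2 * -wp τ v + 2 * (0 * 0) - (0 + wp τ v) =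
    wp τ v by rw [zero_add]; ring] at t
  refine t.congr' ?_
  filter_upwards [eventually_punctured_not_inLattice hτ 0] with u hu
  have hu0 := ne_zero_of_not_inLattice hu
  rw [hzeta.eq_inv_add_zetaReg hτ hu, hwp u, slope_def_field, zero_add, sub_zero]
  field_simp
  ring

/-- The addition theorem for the Weierstrass zeta function. -/
theorem IsWeierstrassZeta.addition (hzeta : IsWeierstrassZeta zeta) (hτ : 0 < τ.im) {u v : ℂ}
    (hu : ¬ InLattice τ u) (hv : ¬ InLattice τ v) (huv : ¬ InLattice τ (u + v)) :
    (zeta τ (u + v) - zeta τ u - zeta τ v) ^ 2 - wp τ u - wp τ (u + v) = wp τ v := by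
  set H : ℂ → ℂ :=
    fun u => (zeta τ (u + v) - zeta τ u - zeta τ v) ^ 2 - wp τ u - wp τ (u + v) with hH
  have h0 : Tendsto H (𝓝[≠] 0) (𝓝 (wp τ v)) := hzeta.tendsto_addition hτ hv
  have hreg (z : ℂ) : ∀ᶠ w in 𝓝[≠] z, ¬ InLattice τ w ∧ ¬ InLattice τ (w + v) :=
    (eventually_punctured_not_inLattice hτ z).and
      ((tendsto_add_const_punctured z v).eventually (eventually_punctured_not_inLattice hτ (z + v)))
  have hd (w : ℂ) (hw : ¬ InLattice τ w ∧ ¬ InLattice τ (w + v)) : DifferentiableAt ℂ H w := by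
    have d1 := ((hzeta τ hτ).2.1 w hw.1).differentiableAt
    have d2 := (((hzeta τ hτ).2.1 _ hw.2).comp_add_const w v).differentiableAt
    have d3 := (hasDerivAt_wp hτ hw.1).differentiableAt
    have d4 := ((hasDerivAt_wp hτ hw.2).comp_add_const w v).differentiableAt
    exact ((((d2.sub d1).sub_const _).pow 2).sub d3).sub d4
  have hper {l : ℂ} (hl : InLattice τ l) (w : ℂ) (hw : ¬ InLattice τ w ∧ ¬ InLattice τ (w + v)) :
      H (w + l) = H w := by
    have e := hzeta.add_sub_eq hτ hl hw.1 hw.2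
    have e' : zeta τ (w + v + l) - zeta τ (w + l) = zeta τ (w + v) - zeta τ w := by
      linear_combination -e
    simp only [hH]
    rw [add_right_comm w l v, e', wp_add_lattice hτ hl, wp_add_lattice hτ hl]
  have hlat {l : ℂ} (hl : InLattice τ l) : Tendsto H (𝓝[≠] l) (𝓝 (wp τ v)) := by
    have hs := tendsto_add_const_punctured l (-l)
    rw [add_neg_cancel] at hs
    refine (h0.comp hs).congr' ?_
    filter_upwards [hreg l] with w hw
    exact hper hl.neg w hw
  have hsymm (w : ℂ) : H (-v - w) = H w := by
    obtain ⟨hodd, -, -⟩ := hzeta τ hτ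
    simp only [hH]
    rw [show -v - w + v = -w by ring, show -v - w = -(w + v) by ring, hodd, hodd, wp_neg hτ,
      wp_neg hτ]
    ring
  have hlim (z : ℂ) : ∃ l, Tendsto H (𝓝[≠] z) (𝓝 l) := by
    by_cases h1 : InLattice τ z
    · exact ⟨_, hlat h1⟩
    by_cases h2 : InLattice τ (z + v)
    · have hl : InLattice τ (-v - z) := by
        rw [show -v - z = -(z + v) by ring]
        exact h2.neg
      have hs : Tendsto (fun w => -v - w) (𝓝[≠] z) (𝓝[≠] (-v - z)) := by
        refine tendsto_nhdsWithin_iff.mpr ⟨?_, ?_⟩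
        · exact (Continuous.tendsto (by fun_prop) z).mono_left nhdsWithin_le_nhds
        · filter_upwards [self_mem_nhdsWithin] with w hw
          simpa using hw
      exact ⟨_, ((hlat hl).comp hs).congr hsymm⟩
    · exact ⟨_, (hd z ⟨h1, h2⟩).continuousAt.tendsto.mono_left nhdsWithin_le_nhds⟩
  obtain ⟨d, h⟩ := exists_affine_of_quasiperiodic hτ (f := H) (a := 0) (b := 0) hlim
    (fun z => (hreg z).mono hd)
    (fun z => (hreg z).mono fun w hw => by rw [hper (InLattice.one τ) w hw, add_zero])
    (fun z => (hreg z).mono fun w hw => by rw [hper (InLattice.self τ) w hw, add_zero])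
  have e0 := tendsto_nhds_unique (h 0) h0
  have eu := tendsto_nhds_unique (h u)
    ((hd u ⟨hu, huv⟩).continuousAt.tendsto.mono_left nhdsWithin_le_nhds)
  change H u = _
  rw [← eu, ← e0, zero_mul, zero_mul]

theorem IsWeierstrassZeta.duplication (hzeta : IsWeierstrassZeta zeta) (hτ : 0 < τ.im) {p : ℂ}
    (hp : ¬ InLattice τ p) (h2p : ¬ InLattice τ (2 * p)) :
    2 * (zeta τ (2 * p) - 2 * zeta τ p) * (wp τ p - wp τ (2 * p)) =
      wpd τ p + wpd τ (2 * p) := by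
  rw [two_mul p] at h2p ⊢
  have hd := (hzeta τ hτ).2.1
  have h1 := ((((((hd _ h2p).comp_add_const p p).sub (hd p hp)).sub_const (zeta τ p)).pow 2).sub
    (hasDerivAt_wp hτ hp)).sub ((hasDerivAt_wp hτ h2p).comp_add_const p p)
  have hev : ∀ᶠ u in 𝓝 p, (zeta τ (u + p) - zeta τ u - zeta τ p) ^ 2 - wp τ u - wp τ (u + p) =
      wp τ p := by
    have hc : Tendsto (fun u => u + p) (𝓝 p) (𝓝 (p + p)) := Continuous.tendsto (by fun_prop) p
    filter_upwards [eventually_not_inLattice hτ hp,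
      hc.eventually (eventually_not_inLattice hτ h2p)] with u hu hup
    exact hzeta.addition hτ hu hp hup
  have h2 : HasDerivAt (fun _ : ℂ => wp τ p) _ p :=
    h1.congr_of_eventuallyEq (hev.mono fun u hu => hu.symm)
  have h3 := h2.unique (hasDerivAt_const p (wp τ p))
  simp at h3
  linear_combination h3

end Addition

/-- Theorem 1.5, differential form: with
`F(τ) = A(τ) + (1/2)(ζ(2p|τ) - 2ζ(p|τ))`, a solution of the Hamiltonian system satisfies
`dF/dτ = (i/(2π))(2℘(2p) - ℘(p) + η₁)F - (i/(4π)) Σ n_k(n_k+1)℘′(p + ω_k/2)`;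
in particular if all `n_k = 0` then `F` solves the homogeneous linear equation. -/
theorem F_linear_ODE
    (n : Fin 4 → ℂ) (zeta : ℂ → ℂ → ℂ) (eta1 : ℂ → ℂ)
    (hzeta : IsWeierstrassZeta zeta) (heta1 : IsEta1 zeta eta1)
    (V : Set ℂ) (hVopen : IsOpen V) (hVH : ∀ τ ∈ V, 0 < τ.im)
    (p A : ℂ → ℂ)
    (hpdiff : DifferentiableOn ℂ p V) (hAdiff : DifferentiableOn ℂ A V)
    (hreg : ∀ τ ∈ V, ¬ InLattice τ (p τ) ∧ ¬ InLattice τ (2 * p τ) ∧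
      ∀ k : Fin 4, ¬ InLattice τ (p τ + halfp τ k / 2))
    (hham : HamSystem n zeta eta1 V p A)
    (F : ℂ → ℂ)
    (hF : ∀ τ, F τ = A τ + (1 / 2) * (zeta τ (2 * p τ) - 2 * zeta τ (p τ))) :
    (∀ τ ∈ V, HasDerivAt F
      ((Complex.I / (2 * (Real.pi : ℂ))) *
          (2 * wp τ (2 * p τ) - wp τ (p τ) + eta1 τ) * F τ
        - (Complex.I / (4 * (Real.pi : ℂ))) *
          ∑ k : Fin 4, n k * (n k + 1) * wpd τ (p τ + halfp τ k / 2)) τ) ∧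
    ((∀ k : Fin 4, n k = 0) → ∀ τ ∈ V, HasDerivAt F
      ((Complex.I / (2 * (Real.pi : ℂ))) *
        (2 * wp τ (2 * p τ) - wp τ (p τ) + eta1 τ) * F τ) τ) := by
  have main : ∀ τ ∈ V, HasDerivAt F
      ((Complex.I / (2 * (Real.pi : ℂ))) *
          (2 * wp τ (2 * p τ) - wp τ (p τ) + eta1 τ) * F τ
        - (Complex.I / (4 * (Real.pi : ℂ))) *
          ∑ k : Fin 4, n k * (n k + 1) * wpd τ (p τ + halfp τ k / 2)) τ := by
    intro τ hτV
    have hτ := hVH τ hτV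
    obtain ⟨hp, h2p, -⟩ := hreg τ hτV
    obtain ⟨dp, dA⟩ := hham τ hτV
    have hpd : ∀ᶠ s in 𝓝 τ, DifferentiableAt ℂ p s := by
      filter_upwards [hVopen.mem_nhds hτV] with s hs
      exact hpdiff.differentiableAt (hVopen.mem_nhds hs)
    obtain ⟨k, hk⟩ := hzeta.exists_zetaRegTau_eq heta1 hτ
    have z1 := hzeta.hasDerivAt_comp hτ hpd dp hp
    have z2 := hzeta.hasDerivAt_comp hτ (g := fun s => 2 * p s)
      (hpd.mono fun s hs => hs.const_mul 2) (dp.const_mul 2) h2p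
    have H := dA.add ((z2.sub (z1.const_mul 2)).const_mul (1 / 2))
    have hdup := hzeta.duplication hτ hp h2p
    refine (H.congr_of_eventuallyEq (.of_forall hF)).congr_deriv ?_
    rw [hF τ, hk _ hp, hk _ h2p]
    rw [show (I / (2 * π) : ℂ) = 2 * (I / (4 * π)) by ring,
      show (-I / (4 * π) : ℂ) = -(I / (4 * π)) by ring]
    linear_combination (I / (4 * π)) * hdup
  refine ⟨main, fun hn τ hτ => ?_⟩
  simpa [hn] using main τ hτ
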